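/- For every n ≥ 1, the number of elements of the Clifford+T group whose minimal T-count (the minimum number of occurrences of T over all words in {H, S, T} representing the element) equals n is exactly 5184·6^{n−1}; equivalently, for every n ≥ 0, the number of elements whose minimal T-count is at most n equals 648·(8·6ⁿ − 3)/5. -/

import Mathlib

open Matrix Complex

noncomputable section

/-- ω = exp(2πi/3), a primitive third root of unity. -/
def ω : ℂ := exp (2 * Real.pi * I / 3)

/-- ζ = exp(2πi/9), a primitive ninth root of unity. -/
def ζ : ℂ := exp (2 * Real.pi * I / 9)

/-- The qutrit Pauli X matrix. -/
def Xmat : Matrix (Fin 3) (Fin 3) ℂ := !![0,0,1; 1,0,0; 0,1,0]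

/-- The qutrit Pauli Z matrix. -/
def Zmat : Matrix (Fin 3) (Fin 3) ℂ := !![1,0,0; 0,ω,0; 0,0,ω^2]

/-- The qutrit Hadamard matrix H = (1/(i√3))·[[1,1,1],[1,ω,ω²],[1,ω²,ω]]. -/
def Hmat : Matrix (Fin 3) (Fin 3) ℂ :=
  (I * (Real.sqrt 3 : ℂ))⁻¹ • !![1,1,1; 1,ω,ω^2; 1,ω^2,ω]

/-- The qutrit phase matrix S = ζ⁸·diag(1,1,ω). -/
def Smat : Matrix (Fin 3) (Fin 3) ℂ := ζ^8 • !![1,0,0; 0,1,0; 0,0,ω]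

/-- The qutrit T matrix T = diag(1,ζ,ζ⁸). -/
def Tmat : Matrix (Fin 3) (Fin 3) ℂ := !![1,0,0; 0,ζ,0; 0,0,ζ^8]

lemma omega_ne_zero : ω ≠ 0 := Complex.exp_ne_zero _
lemma zeta_ne_zero : ζ ≠ 0 := Complex.exp_ne_zero _

lemma omega_im_pos : 0 < ω.im := by
  have h : ω = Complex.exp ((2 * Real.pi / 3 : ℝ) * I) := by
    rw [ω]; push_cast; ring_nf
  rw [h, Complex.exp_ofReal_mul_I_im]
  apply Real.sin_pos_of_pos_of_lt_pi
  · positivity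
  · nlinarith [Real.pi_pos]

lemma omega_ne_one : ω ≠ 1 := by
  intro h
  have := omega_im_pos
  rw [h] at this
  simp at this

lemma omega_cube : ω ^ 3 = 1 := by
  rw [ω, ← Complex.exp_nat_mul]
  rw [show (3:ℕ) * (2 * Real.pi * I / 3) = 2 * Real.pi * I by push_cast; ring]
  exact Complex.exp_two_pi_mul_I

lemma detX : Xmat.det ≠ 0 := by
  simp [Xmat, Matrix.det_fin_three]

lemma detZ : Zmat.det ≠ 0 := by
  simp [Zmat, Matrix.det_fin_three, omega_ne_zero]

lemma detS : Smat.det ≠ 0 := by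
  simp [Smat, Matrix.det_fin_three, omega_ne_zero, zeta_ne_zero]

lemma detT : Tmat.det ≠ 0 := by
  simp [Tmat, Matrix.det_fin_three, zeta_ne_zero]

lemma detH : Hmat.det ≠ 0 := by
  rw [Hmat, Matrix.det_smul]
  apply mul_ne_zero
  · apply pow_ne_zero
    apply inv_ne_zero
    apply mul_ne_zero Complex.I_ne_zero
    simp [Complex.ofReal_ne_zero]
  · rw [Matrix.det_fin_three]
    simp [Matrix.vecHead, Matrix.vecTail]
    intro h
    have h3 : ω ^ 3 = 1 := omega_cube
    have key : 3 * ω * (ω - 1) = 0 := by linear_combination h + ω * h3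
    rcases mul_eq_zero.mp key with h' | h'
    · rcases mul_eq_zero.mp h' with h'' | h''
      · norm_num at h''
      · exact omega_ne_zero h''
    · exact omega_ne_one (by linear_combination h')

/-- X as an element of GL(3, ℂ). -/
def Xg : GL (Fin 3) ℂ := Matrix.GeneralLinearGroup.mkOfDetNeZero Xmat detX

/-- Z as an element of GL(3, ℂ). -/
def Zg : GL (Fin 3) ℂ := Matrix.GeneralLinearGroup.mkOfDetNeZero Zmat detZ

/-- H as an element of GL(3, ℂ). -/
def Hg : GL (Fin 3) ℂ := Matrix.GeneralLinearGroup.mkOfDetNeZero Hmat detH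

/-- S as an element of GL(3, ℂ). -/
def Sg : GL (Fin 3) ℂ := Matrix.GeneralLinearGroup.mkOfDetNeZero Smat detS

/-- T as an element of GL(3, ℂ). -/
def Tg : GL (Fin 3) ℂ := Matrix.GeneralLinearGroup.mkOfDetNeZero Tmat detT

/-- The Clifford group 𝒞: the subgroup of GL(3,ℂ) generated by H and S. -/
def Cliff : Subgroup (GL (Fin 3) ℂ) := Subgroup.closure {Hg, Sg}

/-- The Clifford+T group: the subgroup of GL(3,ℂ) generated by H, S and T. -/
def CliffT : Subgroup (GL (Fin 3) ℂ) := Subgroup.closure {Hg, Sg, Tg}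

/-- The subgroup 𝒮 of GL(3,ℂ) generated by S and X. -/
def Sgrp : Subgroup (GL (Fin 3) ℂ) := Subgroup.closure {Sg, Xg}

/-- Letters of words over the alphabet {H, S, T}. -/
inductive Letter : Type
  | H : Letter
  | S : Letter
  | T : Letter
  deriving DecidableEq

/-- The gate associated to a letter. -/
def Letter.g : Letter → GL (Fin 3) ℂ
  | .H => Hg
  | .S => Sg
  | .T => Tg

/-- The product of the letters of a word. -/
def wordProd (w : List Letter) : GL (Fin 3) ℂ := (w.map Letter.g).prod

/-- The allowed prefixes of a canonical form: ε, T, H²T. -/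
def Prefixes : Set (List Letter) := {[], [.T], [.H, .H, .T]}

/-- The allowed syllables of a canonical form: HT, H³T, SHT, SH³T, S²HT, S²H³T. -/
def Syllables : Set (List Letter) :=
  {[.H, .T], [.H, .H, .H, .T], [.S, .H, .T],
   [.S, .H, .H, .H, .T], [.S, .S, .H, .T], [.S, .S, .H, .H, .H, .T]}

/-- The T-count of a canonical form with prefix `p` and syllable list `ss`:
`k` if the prefix is empty and `k+1` otherwise, where `k` is the number of syllables. -/
def TCount (p : List Letter) (ss : List (List Letter)) : ℕ :=
  ss.length + (if p = [] then 0 else 1)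

/-- P₊ = (P + P²)/√6. -/
def Pplus (P : Matrix (Fin 3) (Fin 3) ℂ) : Matrix (Fin 3) (Fin 3) ℂ :=
  ((Real.sqrt 6 : ℂ))⁻¹ • (P + P ^ 2)

/-- P₋ = i(P − P²)/√6. -/
def Pminus (P : Matrix (Fin 3) (Fin 3) ℂ) : Matrix (Fin 3) (Fin 3) ℂ :=
  (I * ((Real.sqrt 6 : ℂ))⁻¹) • (P - P ^ 2)

/-- The ordered tuple (Q₁, …, Q₈) = (Z₊, X₊, (XZ)₊, (XZ²)₊, Z₋, X₋, (XZ)₋, (XZ²)₋). -/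
def Q : Fin 8 → Matrix (Fin 3) (Fin 3) ℂ :=
  ![Pplus Zmat, Pplus Xmat, Pplus (Xmat * Zmat), Pplus (Xmat * Zmat ^ 2),
    Pminus Zmat, Pminus Xmat, Pminus (Xmat * Zmat), Pminus (Xmat * Zmat ^ 2)]

/-- The adjoint representation Û of U, the 8×8 real matrix with
entries Û_{ij} = tr(Qᵢ U Qⱼ U†). -/
def adj (U : Matrix (Fin 3) (Fin 3) ℂ) : Matrix (Fin 8) (Fin 8) ℝ :=
  Matrix.of fun i j => (Matrix.trace (Q i * U * Q j * Uᴴ)).re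

/-- The top-left 4×4 quadrant Û₊₊. -/
def blockPP (A : Matrix (Fin 8) (Fin 8) ℝ) : Matrix (Fin 4) (Fin 4) ℝ :=
  Matrix.of fun i j => A ⟨i.val, by omega⟩ ⟨j.val, by omega⟩

/-- The top-right 4×4 quadrant Û₊₋. -/
def blockPM (A : Matrix (Fin 8) (Fin 8) ℝ) : Matrix (Fin 4) (Fin 4) ℝ :=
  Matrix.of fun i j => A ⟨i.val, by omega⟩ ⟨j.val + 4, by omega⟩

/-- The bottom-left 4×4 quadrant Û₋₊. -/
def blockMP (A : Matrix (Fin 8) (Fin 8) ℝ) : Matrix (Fin 4) (Fin 4) ℝ :=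
  Matrix.of fun i j => A ⟨i.val + 4, by omega⟩ ⟨j.val, by omega⟩

/-- The bottom-right 4×4 quadrant Û₋₋. -/
def blockMM (A : Matrix (Fin 8) (Fin 8) ℝ) : Matrix (Fin 4) (Fin 4) ℝ :=
  Matrix.of fun i j => A ⟨i.val + 4, by omega⟩ ⟨j.val + 4, by omega⟩

/-- α = sin(2π/9). -/
def αR : ℝ := Real.sin (2 * Real.pi / 9)

/-- The ring ℤ[α]: the subring of ℝ generated by 1/2 and α. -/
def Zα : Subring ℝ := Subring.closure {1/2, αR}

/-- The ring ℤ[1/2, 1/α]: the subring of ℝ generated by 1/2, α and α⁻¹. -/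
def Zhα : Subring ℝ := Subring.closure {1/2, αR, αR⁻¹}

lemma alpha_mem_Zα : αR ∈ Zα := Subring.subset_closure (by simp)

/-- The minimal T-count of an element of the Clifford+T group: the minimum over all
words w in the alphabet {H, S, T} with product equal to U of the number of
occurrences of the letter T in w. -/
def minTcount (U : GL (Fin 3) ℂ) : ℕ :=
  sInf {k : ℕ | ∃ w : List Letter, wordProd w = U ∧ w.count Letter.T = k}

/-!
Let `C` be the Clifford group and let `D` be the group generated by `T` and the monomial Clifford
matrices. Over `ℤ[ζ]`, in coordinates adapted to a lattice stable under `H` and `S`, every element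
has a denominator `(1 - ζ) ^ n`, and the residue modulo `1 - ζ` of its numerator is a nonzero matrix
over `𝔽₃`. Elements of `C` have denominator `1` and a residue of block triangular shape, and
elements of `D \ C` have denominator `1 - ζ` and a residue of low rank. Playing ping-pong with the
shape of the residues, one finds that multiplying out a reduced word in `C` and `D` never lowers the
denominator, whose exponent is the number of letters outside `C`. This number is also the minimal
`T`-count, since `D \ C` lies in `C T C ∪ C T⁻¹ C` and `T⁻¹ = H² T H²`. As `C ∩ D` has index `4` in
`C` and `3` in `D`, the reduced words with `n ≥ 1` letters outside `C` represent
`4 * 2 * (3 * 2) ^ (n - 1) * |C|` elements, where `|C| = 648`.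
-/

section AlternatingProducts

open scoped Pointwise

variable {G : Type*} [Group G]

/-- Each element of `A * S` has exactly `|B|` factorizations, namely `(a * b) * (b⁻¹ * s)`. -/
lemma ncard_mul_mul_card {B : Subgroup G} {A S : Set G} (hA : A * B ⊆ A) (hS : (B : Set G) * S ⊆ S)
    (h : ∀ a ∈ A, ∀ a' ∈ A, ∀ s ∈ S, ∀ s' ∈ S, a * s = a' * s' → a⁻¹ * a' ∈ B) :
    (A * S).ncard * Nat.card B = A.ncard * S.ncard := by
  have hmem : ∀ g ∈ A * S, ∃ a ∈ A, ∃ s ∈ S, a * s = g := fun g => Set.mem_mul.mp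
  choose! α hα σ hσ hασ using hmem
  have hbij : Set.BijOn (fun p : G × G => (α p.1 * p.2, p.2⁻¹ * σ p.1))
      ((A * S) ×ˢ (B : Set G)) (A ×ˢ S) := by
    refine ⟨?_, ?_, ?_⟩
    · rintro ⟨g, b⟩ ⟨hg, hb⟩
      exact ⟨hA (Set.mul_mem_mul (hα g hg) hb), hS (Set.mul_mem_mul (B.inv_mem hb) (hσ g hg))⟩
    · rintro ⟨g, b⟩ ⟨hg, -⟩ ⟨g', b'⟩ ⟨hg', -⟩ heq
      obtain ⟨h₁, h₂⟩ := Prod.mk.inj heq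
      have hprod : α g * b * (b⁻¹ * σ g) = α g' * b' * (b'⁻¹ * σ g') := congrArg₂ _ h₁ h₂
      obtain rfl : g = g' := by simpa [mul_assoc, hασ, hg, hg'] using hprod
      obtain rfl : b = b' := mul_left_cancel h₁
      rfl
    · rintro ⟨a, s⟩ ⟨ha, hs⟩
      have hg : a * s ∈ A * S := Set.mul_mem_mul ha hs
      refine ⟨(a * s, (α (a * s))⁻¹ * a),
        ⟨hg, h _ (hα _ hg) a ha _ (hσ _ hg) s hs (hασ _ hg)⟩, ?_⟩
      simp [mul_assoc, hασ _ hg]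
  have hcard := hbij.ncard_eq
  rwa [Set.ncard_prod, Set.ncard_prod] at hcard

lemma card_inf_mul_relIndex (H K : Subgroup G) :
    Nat.card (H ⊓ K : Subgroup G) * H.relIndex K = Nat.card K := by
  rw [← Subgroup.inf_relIndex_right, ← Subgroup.relIndex_bot_left, ← Subgroup.relIndex_bot_left,
    Subgroup.relIndex_mul_relIndex _ _ _ bot_le inf_le_right]

lemma ncard_sdiff_eq_relIndex_sub_one_mul (H K : Subgroup G) [Finite K] :
    ((K : Set G) \ H).ncard = (H.relIndex K - 1) * Nat.card (H ⊓ K : Subgroup G) := by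
  have : Finite (H ⊓ K : Subgroup G) := Finite.Set.finite_inter_of_right _ _
  rw [← Set.sdiff_inter_self_eq_sdiff, ← Subgroup.coe_inf,
    Set.ncard_sdiff (SetLike.coe_subset_coe.mpr inf_le_right) (Set.toFinite _)]
  change Nat.card K - Nat.card (H ⊓ K : Subgroup G) = _
  rw [← card_inf_mul_relIndex H K, Nat.sub_one_mul, mul_comm]

variable (C D : Subgroup G)

/-- The products `c₁ d₁ c₂ d₂ ⋯ cₙ dₙ c` with `cᵢ ∈ C \ D`, `dᵢ ∈ D \ C` and `c ∈ C`: the reduced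
words of the amalgam of `C` and `D` with `n` letters outside `C`, starting with a letter outside
`D` unless `n = 0`. -/
def reducedC : ℕ → Set G
  | 0 => C
  | n + 1 => ((C : Set G) \ D) * (((D : Set G) \ C) * reducedC n)

/-- The reduced words with `n + 1` letters outside `C` that start with one of these. -/
def reducedD (n : ℕ) : Set G := ((D : Set G) \ C) * reducedC C D n

/-- All reduced words with exactly `n` letters outside `C`. In terms of the Bass–Serre tree these
are the elements that move the vertex fixed by `C` to distance `2 * n`. -/
def reducedSphere : ℕ → Set G
  | 0 => C
  | n + 1 => C * reducedD C D n

variable {C D} {n : ℕ}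

lemma mul_mem_sdiff_of_mem {H K : Subgroup G} {a b : G} (ha : a ∈ H ⊓ K)
    (hb : b ∈ (K : Set G) \ H) : a * b ∈ (K : Set G) \ H :=
  ⟨K.mul_mem ha.2 hb.1, fun h => hb.2 ((H.mul_mem_cancel_left ha.1).mp h)⟩

lemma sdiff_mul_inf_subset (H K : Subgroup G) :
    ((K : Set G) \ H) * (H ⊓ K : Subgroup G) ⊆ (K : Set G) \ H := by
  rintro _ ⟨a, ha, b, hb, rfl⟩
  exact ⟨K.mul_mem ha.1 hb.2, fun h => ha.2 ((H.mul_mem_cancel_right hb.1).mp h)⟩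

lemma inf_mul_reducedC_subset :
    ((C ⊓ D : Subgroup G) : Set G) * reducedC C D n ⊆ reducedC C D n := by
  rintro _ ⟨b, hb, y, hy, rfl⟩
  cases n with
  | zero => exact C.mul_mem hb.1 hy
  | succ n =>
    obtain ⟨c, hc, y, hy, rfl⟩ := hy
    exact ⟨b * c, mul_mem_sdiff_of_mem hb.symm hc, y, hy, mul_assoc b c y⟩

lemma inf_mul_reducedD_subset :
    ((C ⊓ D : Subgroup G) : Set G) * reducedD C D n ⊆ reducedD C D n := by
  rintro _ ⟨b, hb, _, ⟨d, hd, y, hy, rfl⟩, rfl⟩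
  exact ⟨b * d, mul_mem_sdiff_of_mem hb hd, y, hy, mul_assoc b d y⟩

lemma mem_reducedSphere_succ {g : G} :
    g ∈ reducedSphere C D (n + 1) ↔ g ∈ reducedC C D (n + 1) ∨ g ∈ reducedD C D n := by
  constructor
  · rintro ⟨c, hc, y, hy, rfl⟩
    by_cases hcD : c ∈ D
    · exact .inr (inf_mul_reducedD_subset ⟨c, ⟨hc, hcD⟩, y, hy, rfl⟩)
    · exact .inl ⟨c, ⟨hc, hcD⟩, y, hy, rfl⟩
  · rintro (⟨c, hc, y, hy, rfl⟩ | hg)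
    · exact ⟨c, hc.1, y, hy, rfl⟩
    · exact ⟨1, C.one_mem, g, hg, one_mul g⟩

lemma reducedC_subset_reducedSphere : reducedC C D n ⊆ reducedSphere C D n := by
  cases n with
  | zero => exact subset_rfl
  | succ n => exact fun _ hg => mem_reducedSphere_succ.mpr (.inl hg)

lemma mul_mem_reducedSphere {c g : G} (hc : c ∈ C) (hg : g ∈ reducedSphere C D n) :
    c * g ∈ reducedSphere C D n := by
  cases n with
  | zero => exact C.mul_mem hc hg
  | succ n =>
    obtain ⟨c', hc', y, hy, rfl⟩ := hg
    exact ⟨c * c', C.mul_mem hc hc', y, hy, mul_assoc c c' y⟩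

lemma exists_mul_mem_reducedSphere_of_mem_reducedC {d g : G} (hd : d ∈ D)
    (hg : g ∈ reducedC C D n) : ∃ j ≤ n + 1, d * g ∈ reducedSphere C D j := by
  by_cases hdC : d ∈ C
  · exact ⟨n, n.le_succ, reducedC_subset_reducedSphere
      (inf_mul_reducedC_subset ⟨d, ⟨hdC, hd⟩, g, hg, rfl⟩)⟩
  · exact ⟨n + 1, le_rfl, mem_reducedSphere_succ.mpr (.inr ⟨d, ⟨hd, hdC⟩, g, hg, rfl⟩)⟩

lemma exists_mul_mem_reducedSphere {d g : G} (hd : d ∈ D) (hg : g ∈ reducedSphere C D n) :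
    ∃ j ≤ n + 1, d * g ∈ reducedSphere C D j := by
  cases n with
  | zero => exact exists_mul_mem_reducedSphere_of_mem_reducedC (n := 0) hd hg
  | succ n =>
    rcases mem_reducedSphere_succ.mp hg with hg | ⟨d', hd', y, hy, rfl⟩
    · exact exists_mul_mem_reducedSphere_of_mem_reducedC hd hg
    · obtain ⟨j, hj, hmem⟩ :=
        exists_mul_mem_reducedSphere_of_mem_reducedC (D.mul_mem hd hd'.1) hy
      exact ⟨j, by omega, by rwa [← mul_assoc]⟩

lemma exists_mem_reducedSphere_of_mem_sup {g : G} (hg : g ∈ C ⊔ D) :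
    ∃ n, g ∈ reducedSphere C D n := by
  rw [Subgroup.sup_eq_closure] at hg
  have hstep : ∀ x ∈ (C : Set G) ∪ D, ∀ y, (∃ n, y ∈ reducedSphere C D n) →
      ∃ n, x * y ∈ reducedSphere C D n := by
    rintro x (hx | hx) y ⟨n, hy⟩
    · exact ⟨n, mul_mem_reducedSphere hx hy⟩
    · obtain ⟨j, -, hj⟩ := exists_mul_mem_reducedSphere hx hy
      exact ⟨j, hj⟩
  induction hg using Subgroup.closure_induction_left with
  | one => exact ⟨0, C.one_mem⟩
  | mul_left x hx y _ ih => exact hstep x hx y ih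
  | inv_mul_cancel x hx y _ ih => exact hstep x⁻¹ (hx.imp C.inv_mem D.inv_mem) y ih

section Count

variable (hdisj : ∀ n m, Disjoint (reducedC C D n) (reducedD C D m))
include hdisj

lemma ncard_reducedD [Finite D] :
    (reducedD C D n).ncard = (C.relIndex D - 1) * (reducedC C D n).ncard := by
  have : Finite (C ⊓ D : Subgroup G) := Finite.Set.finite_inter_of_right _ _
  have hcount := ncard_mul_mul_card (sdiff_mul_inf_subset C D) (inf_mul_reducedC_subset (n := n))
    fun d hd d' hd' y hy y' hy' heq => by
      have hmem : d⁻¹ * d' ∈ D := D.mul_mem (D.inv_mem hd.1) hd'.1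
      refine ⟨by_contra fun hC => (hdisj n n).notMem_of_mem_left hy ?_, hmem⟩
      exact ⟨d⁻¹ * d', ⟨hmem, hC⟩, y', hy', by simp [mul_assoc, ← heq]⟩
  rw [ncard_sdiff_eq_relIndex_sub_one_mul, mul_right_comm] at hcount
  exact Nat.eq_of_mul_eq_mul_right Nat.card_pos hcount

lemma inv_mul_mem_of_mul_eq_mul {c c' y y' : G} (hc : c ∈ C) (hc' : c' ∈ C)
    (hy : y ∈ reducedD C D n) (hy' : y' ∈ reducedD C D n) (heq : c * y = c' * y') :
    c⁻¹ * c' ∈ D ⊓ C := by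
  have hmem : c⁻¹ * c' ∈ C := C.mul_mem (C.inv_mem hc) hc'
  refine ⟨by_contra fun hD => (hdisj (n + 1) n).notMem_of_mem_right hy ?_, hmem⟩
  exact ⟨c⁻¹ * c', ⟨hmem, hD⟩, y', hy', by simp [mul_assoc, ← heq]⟩

lemma ncard_reducedC_succ [Finite C] :
    (reducedC C D (n + 1)).ncard = (D.relIndex C - 1) * (reducedD C D n).ncard := by
  have : Finite (D ⊓ C : Subgroup G) := Finite.Set.finite_inter_of_right _ _
  have hcount := ncard_mul_mul_card (sdiff_mul_inf_subset D C)
    (inf_comm C D ▸ inf_mul_reducedD_subset (n := n))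
    fun c hc c' hc' y hy y' hy' => inv_mul_mem_of_mul_eq_mul hdisj hc.1 hc'.1 hy hy'
  rw [ncard_sdiff_eq_relIndex_sub_one_mul, mul_right_comm] at hcount
  exact Nat.eq_of_mul_eq_mul_right Nat.card_pos hcount

lemma ncard_reducedC [Finite C] [Finite D] (n : ℕ) :
    (reducedC C D n).ncard =
      ((D.relIndex C - 1) * (C.relIndex D - 1)) ^ n * Nat.card C := by
  induction n with
  | zero => rw [pow_zero, one_mul]; rfl
  | succ n ih => rw [ncard_reducedC_succ hdisj, ncard_reducedD hdisj, ih]; ring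

lemma ncard_reducedSphere_succ [Finite C] [Finite D] (n : ℕ) :
    (reducedSphere C D (n + 1)).ncard = D.relIndex C * (C.relIndex D - 1) *
      ((D.relIndex C - 1) * (C.relIndex D - 1)) ^ n * Nat.card C := by
  have : Finite (D ⊓ C : Subgroup G) := Finite.Set.finite_inter_of_right _ _
  have hcount := ncard_mul_mul_card (B := D ⊓ C) (A := C)
    (by rintro _ ⟨a, ha, b, hb, rfl⟩; exact C.mul_mem ha hb.2)
    (inf_comm C D ▸ inf_mul_reducedD_subset (n := n))
    fun c hc c' hc' y hy y' hy' => inv_mul_mem_of_mul_eq_mul hdisj hc hc' hy hy'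
  change _ = Nat.card C * _ at hcount
  rw [← card_inf_mul_relIndex D C, mul_assoc, mul_comm] at hcount
  change (↑C * reducedD C D n).ncard = _
  rw [Nat.eq_of_mul_eq_mul_left Nat.card_pos hcount, ncard_reducedD hdisj, ncard_reducedC hdisj]
  ring

end Count

end AlternatingProducts

section Residue

variable {m R K k : Type*} [CommRing R] [CommRing K] [CommRing k]

/-- `A` is the reduction along `ρ` of a lift along `ι` of `ϖ ^ n • U`. For the ring `R` of integers
of a local field `K` with uniformizer `ϖ` and residue field `k`, a nonzero residue exists only at
the level `n` that is the exact exponent of the denominator of `U`. -/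
def HasResidue (ι : R →+* K) (ρ : R →+* k) (ϖ : R) (n : ℕ) (U : Matrix m m K)
    (A : Matrix m m k) : Prop :=
  ∃ N : Matrix m m R, ι ϖ ^ n • U = N.map ι ∧ N.map ρ = A

variable {ι : R →+* K} {ρ : R →+* k} {ϖ : R} {n n' : ℕ} {U U' : Matrix m m K}
  {A A' : Matrix m m k}

lemma HasResidue.one [DecidableEq m] : HasResidue ι ρ ϖ 0 (1 : Matrix m m K) 1 :=
  ⟨1, by simp, by simp⟩

lemma HasResidue.mul [Fintype m] (h : HasResidue ι ρ ϖ n U A) (h' : HasResidue ι ρ ϖ n' U' A') :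
    HasResidue ι ρ ϖ (n + n') (U * U') (A * A') := by
  obtain ⟨N, hN, rfl⟩ := h
  obtain ⟨N', hN', rfl⟩ := h'
  refine ⟨N * N', ?_, Matrix.map_mul⟩
  rw [Matrix.map_mul, ← hN, ← hN', smul_mul_smul_comm, pow_add]

lemma HasResidue.eq_zero_pow_smul (hker : RingHom.ker ι ≤ RingHom.ker ρ) (hϖ : ρ ϖ = 0)
    (h : HasResidue ι ρ ϖ n U A) (h' : HasResidue ι ρ ϖ (n + n') U A') :
    A' = (0 : k) ^ n' • A := by
  obtain ⟨N, hN, rfl⟩ := h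
  obtain ⟨N', hN', rfl⟩ := h'
  ext i j
  have hentry : ι (N' i j) = ι (ϖ ^ n' * N i j) := by
    have hmap : N'.map ι = ι ϖ ^ n' • N.map ι := by rw [← hN, ← hN', smul_smul, pow_add, mul_comm]
    simpa using congrFun₂ hmap i j
  have hred : ρ (N' i j - ϖ ^ n' * N i j) = 0 := hker (by simp [RingHom.mem_ker, hentry])
  simpa [hϖ, sub_eq_zero] using hred

lemma HasResidue.level_eq (hker : RingHom.ker ι ≤ RingHom.ker ρ) (hϖ : ρ ϖ = 0)
    (h : HasResidue ι ρ ϖ n U A) (h' : HasResidue ι ρ ϖ n' U A') (hA : A ≠ 0) (hA' : A' ≠ 0) :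
    n = n' := by
  wlog hle : n ≤ n' generalizing n n' A A'
  · exact (this h' h hA' hA (le_of_not_ge hle)).symm
  obtain ⟨j, rfl⟩ := Nat.exists_eq_add_of_le hle
  have hj : j = 0 := by
    by_contra hj
    exact hA' (by simpa [hj] using h.eq_zero_pow_smul hker hϖ h')
  rw [hj, add_zero]

lemma HasResidue.unique (hker : RingHom.ker ι ≤ RingHom.ker ρ) (hϖ : ρ ϖ = 0)
    (h : HasResidue ι ρ ϖ n U A) (h' : HasResidue ι ρ ϖ n U A') : A = A' := by
  simpa using (h.eq_zero_pow_smul (n' := 0) hker hϖ h').symm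

end Residue

section Monomial

open Equiv

variable {m M R : Type*} [Fintype m] [DecidableEq m] [AddCommGroup M] [CommRing R]
  (ψ : AddChar M R)

/-- The monomial matrix sending `eⱼ` to `sign σ • ψ (x j) • e_{σ j}`. The sign makes its
determinant `∏ j, ψ (x j)` when the dimension is odd. -/
def monomialMatrix (σ : Perm m) (x : m → M) : Matrix m m R :=
  of fun i j => if i = σ j then ((Perm.sign σ : ℤ) : R) * ψ (x j) else 0

lemma monomialMatrix_mul (σ τ : Perm m) (x y : m → M) :
    monomialMatrix ψ σ x * monomialMatrix ψ τ y = monomialMatrix ψ (σ * τ) (x ∘ τ + y) := by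
  ext i j
  simp only [monomialMatrix, Matrix.mul_apply, of_apply, mul_ite, mul_zero, Finset.sum_ite_eq',
    Finset.mem_univ, if_true, Perm.coe_mul, Function.comp_apply, Pi.add_apply,
    AddChar.map_add_eq_mul, Perm.sign_mul, Units.val_mul, Int.cast_mul, ite_mul, zero_mul]
  split_ifs <;> ring

lemma monomialMatrix_one_zero : monomialMatrix ψ (1 : Perm m) 0 = 1 := by
  ext i j
  simp [monomialMatrix, Matrix.one_apply]

/-- `monomialMatrix` as an invertible matrix. -/
def monomialGL (σ : Perm m) (x : m → M) : GL m R where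
  val := monomialMatrix ψ σ x
  inv := monomialMatrix ψ σ⁻¹ (-(x ∘ ⇑σ⁻¹))
  val_inv := by
    rw [monomialMatrix_mul, mul_inv_cancel, add_neg_cancel, monomialMatrix_one_zero]
  inv_val := by
    rw [monomialMatrix_mul, inv_mul_cancel, ← monomialMatrix_one_zero ψ]
    congr 1
    funext i
    simp

lemma monomialGL_mul (σ τ : Perm m) (x y : m → M) :
    monomialGL ψ σ x * monomialGL ψ τ y = monomialGL ψ (σ * τ) (x ∘ τ + y) :=
  Units.ext (monomialMatrix_mul ψ σ τ x y)

lemma monomialGL_one_zero : monomialGL ψ (1 : Perm m) 0 = 1 :=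
  Units.ext (monomialMatrix_one_zero ψ)

lemma monomialGL_one_nsmul (x : m → M) (n : ℕ) :
    monomialGL ψ 1 (n • x) = monomialGL ψ 1 x ^ n := by
  induction n with
  | zero => rw [zero_smul, pow_zero, monomialGL_one_zero]
  | succ n ih => rw [pow_succ, ← ih, monomialGL_mul, mul_one, succ_nsmul]; rfl

lemma monomialGL_pow_zero (σ : Perm m) (n : ℕ) :
    monomialGL ψ (σ ^ n) 0 = monomialGL ψ σ 0 ^ n := by
  induction n with
  | zero => rw [pow_zero, pow_zero, monomialGL_one_zero]
  | succ n ih => rw [pow_succ, pow_succ, ← ih, monomialGL_mul, add_zero]; rfl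

variable {ψ}

lemma monomialGL_injective [Nontrivial R] (hψ : Function.Injective ψ) :
    Function.Injective fun p : Perm m × (m → M) => monomialGL ψ p.1 p.2 := by
  rintro ⟨σ, x⟩ ⟨τ, y⟩ h
  have hentry : ∀ i j, monomialMatrix ψ σ x i j = monomialMatrix ψ τ y i j :=
    congrFun₂ (congrArg Units.val h)
  have hsign : ∀ π : Perm m, IsUnit ((Perm.sign π : ℤ) : R) := fun π =>
    (Perm.sign π).isUnit.map (Int.castRingHom R)
  obtain rfl : σ = τ := by
    ext j
    by_contra hne
    have hzero := hentry (σ j) j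
    simp only [monomialMatrix, of_apply, if_true, if_neg hne] at hzero
    exact ((hsign σ).mul (ψ.val_isUnit (x j))).ne_zero hzero
  refine Prod.ext rfl (funext fun j => hψ ((hsign σ).mul_left_cancel ?_))
  simpa only [monomialMatrix, of_apply, if_true] using hentry (σ j) j

variable (ψ) in
/-- The monomial matrices with exponents in a permutation invariant group `Λ`. -/
def monomialSubgroup (Λ : AddSubgroup (m → M)) (hΛ : ∀ x ∈ Λ, ∀ σ : Perm m, x ∘ σ ∈ Λ) :
    Subgroup (GL m R) where
  carrier := {g | ∃ σ, ∃ x ∈ Λ, monomialGL ψ σ x = g}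
  mul_mem' := by
    rintro _ _ ⟨σ, x, hx, rfl⟩ ⟨τ, y, hy, rfl⟩
    exact ⟨σ * τ, _, Λ.add_mem (hΛ x hx τ) hy, (monomialGL_mul ψ σ τ x y).symm⟩
  one_mem' := ⟨1, 0, Λ.zero_mem, monomialGL_one_zero ψ⟩
  inv_mem' := by
    rintro _ ⟨σ, x, hx, rfl⟩
    exact ⟨σ⁻¹, _, Λ.neg_mem (hΛ x hx σ⁻¹), Units.ext rfl⟩

lemma card_monomialSubgroup [Nontrivial R] (hψ : Function.Injective ψ) (Λ : AddSubgroup (m → M))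
    (hΛ : ∀ x ∈ Λ, ∀ σ : Perm m, x ∘ σ ∈ Λ) :
    Nat.card (monomialSubgroup ψ Λ hΛ) = (Fintype.card m).factorial * Nat.card Λ := by
  have himage : (monomialSubgroup ψ Λ hΛ : Set (GL m R)) =
      (fun p : Perm m × (m → M) => monomialGL ψ p.1 p.2) '' (Set.univ ×ˢ (Λ : Set (m → M))) := by
    ext g
    constructor
    · rintro ⟨σ, x, hx, rfl⟩
      exact ⟨(σ, x), ⟨trivial, hx⟩, rfl⟩
    · rintro ⟨⟨σ, x⟩, ⟨-, hx⟩, rfl⟩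
      exact ⟨σ, x, hx, rfl⟩
  change (monomialSubgroup ψ Λ hΛ : Set (GL m R)).ncard = _
  rw [himage, Set.ncard_image_of_injective _ (monomialGL_injective hψ), Set.ncard_prod,
    Set.ncard_univ, Nat.card_perm, Nat.card_eq_fintype_card]
  rfl

end Monomial

lemma zeta_isPrimitiveRoot : IsPrimitiveRoot ζ 9 := Complex.isPrimitiveRoot_exp 9 (by norm_num)

lemma omega_eq_zeta_pow : ω = ζ ^ 3 := by
  rw [ω, ζ, ← Complex.exp_nat_mul]
  congr 1
  push_cast
  ring

lemma zeta_pow_nine : ζ ^ 9 = 1 := zeta_isPrimitiveRoot.pow_eq_one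

lemma zeta_pow_six_add : ζ ^ 6 + ζ ^ 3 + 1 = 0 := by
  have hfactor : (ζ ^ 3 - 1) * (ζ ^ 6 + ζ ^ 3 + 1) = 0 := by linear_combination zeta_pow_nine
  refine (mul_eq_zero.mp hfactor).resolve_left (sub_ne_zero.mpr ?_)
  exact omega_eq_zeta_pow ▸ omega_ne_one

lemma zeta_pow_eight : ζ ^ 8 = -ζ ^ 5 - ζ ^ 2 := by linear_combination ζ ^ 2 * zeta_pow_six_add

lemma omega_eq_mk : ω = ⟨-1 / 2, Real.sqrt 3 / 2⟩ := by
  have hexp : ω = Complex.exp ((2 * Real.pi / 3 : ℝ) * I) := by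
    rw [ω]
    push_cast
    ring_nf
  have hangle : 2 * Real.pi / 3 = Real.pi - Real.pi / 3 := by ring
  apply Complex.ext
  · rw [hexp, Complex.exp_ofReal_mul_I_re, hangle, Real.cos_pi_sub, Real.cos_pi_div_three]
    norm_num
  · rw [hexp, Complex.exp_ofReal_mul_I_im, hangle, Real.sin_pi_sub, Real.sin_pi_div_three]

lemma I_mul_sqrt_three : I * (Real.sqrt 3 : ℂ) = 2 * ζ ^ 3 + 1 := by
  rw [← omega_eq_zeta_pow, omega_eq_mk]
  apply Complex.ext <;> simp <;> ring

lemma inv_I_mul_sqrt_three : (I * (Real.sqrt 3 : ℂ))⁻¹ = -(2 * ζ ^ 3 + 1) / 3 := by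
  rw [I_mul_sqrt_three]
  apply inv_eq_of_mul_eq_one_left
  linear_combination (-4 / 3 : ℂ) * zeta_pow_six_add

lemma val_Hg : Hg.val = (-(2 * ζ ^ 3 + 1) / 3) •
    !![1, 1, 1; 1, ζ ^ 3, -ζ ^ 3 - 1; 1, -ζ ^ 3 - 1, ζ ^ 3] := by
  have hsq : ω ^ 2 = -ζ ^ 3 - 1 := by
    rw [omega_eq_zeta_pow]
    linear_combination zeta_pow_six_add
  change Hmat = _
  rw [Hmat, inv_I_mul_sqrt_three, hsq, omega_eq_zeta_pow]

lemma val_Sg : Sg.val = !![-ζ ^ 5 - ζ ^ 2, 0, 0; 0, -ζ ^ 5 - ζ ^ 2, 0; 0, 0, ζ ^ 2] := by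
  have hlast : ζ ^ 8 * ζ ^ 3 = ζ ^ 2 := by linear_combination ζ ^ 2 * zeta_pow_nine
  change Smat = _
  simp [Smat, omega_eq_zeta_pow, ← zeta_pow_eight, hlast]

lemma val_Tg : Tg.val = !![1, 0, 0; 0, ζ, 0; 0, 0, -ζ ^ 5 - ζ ^ 2] := by
  change Tmat = _
  rw [Tmat, zeta_pow_eight]

section Lattice

open Polynomial

/-- Evaluation `ℤ[X] → ℤ[ζ] ⊆ ℂ`. -/
def evalZeta : ℤ[X] →+* ℂ := eval₂RingHom (Int.castRingHom ℂ) ζ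

/-- The reduction of `ℤ[ζ]` modulo its prime `1 - ζ` above `3`, pulled back to `ℤ[X]`. -/
def evalOne : ℤ[X] →+* ZMod 3 := eval₂RingHom (Int.castRingHom (ZMod 3)) 1

lemma ker_evalZeta_le_ker_evalOne : RingHom.ker evalZeta ≤ RingHom.ker evalOne := by
  intro p hp
  have hroot : aeval ζ p = 0 := hp
  obtain ⟨q, rfl⟩ := minpoly.isIntegrallyClosed_dvd
    (zeta_isPrimitiveRoot.isIntegral (by norm_num)) hroot
  rw [← cyclotomic_eq_minpoly zeta_isPrimitiveRoot (by norm_num), RingHom.mem_ker, map_mul]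
  have hcyclotomic : evalOne (cyclotomic (3 ^ (1 + 1)) ℤ) = ((3 : ℤ) : ZMod 3) := by
    have h := eval_one_cyclotomic_prime_pow (R := ℤ) (p := 3) 1
    change eval₂ _ 1 _ = _
    rw [eval₂_at_one, h]
    rfl
  norm_num at hcyclotomic
  rw [hcyclotomic, show (3 : ZMod 3) = 0 from rfl, zero_mul]

lemma evalOne_one_sub_X : evalOne (1 - X) = 0 := by simp [evalOne]

/-- The columns of this matrix span a `ℤ[ζ]`-lattice that is stable under `H` and `S`. -/
def latticeMat : Matrix (Fin 3) (Fin 3) ℂ :=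
  !![1 - ζ, 0, 0;
     1 - ζ, (2 * ζ ^ 3 + 1) * (1 - ζ), 2 * ζ ^ 3 + 1;
     1 - ζ, 0, -(2 * ζ ^ 3 + 1)]

lemma det_latticeMat_ne_zero : latticeMat.det ≠ 0 := by
  have hdet : latticeMat.det = -((1 - ζ) * (I * (Real.sqrt 3 : ℂ))) ^ 2 := by
    rw [latticeMat, Matrix.det_fin_three, I_mul_sqrt_three]
    simp
    ring
  have hne : 1 - ζ ≠ 0 := sub_ne_zero.mpr (zeta_isPrimitiveRoot.ne_one (by norm_num)).symm
  simp [hdet, hne]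

/-- `latticeMat` as an invertible matrix. -/
def latticeGL : GL (Fin 3) ℂ :=
  Matrix.GeneralLinearGroup.mkOfDetNeZero latticeMat det_latticeMat_ne_zero

/-- `U` has denominator `(1 - ζ) ^ n` with respect to the lattice of `latticeMat`, with residue
matrix `A` over `ℤ[ζ] / (1 - ζ) = 𝔽₃`. -/
def HasLatticeResidue (n : ℕ) (U : GL (Fin 3) ℂ) (A : Matrix (Fin 3) (Fin 3) (ZMod 3)) : Prop :=
  HasResidue evalZeta evalOne (1 - X) n (latticeGL⁻¹ * U * latticeGL).val A

variable {n n' : ℕ} {U U' : GL (Fin 3) ℂ} {A A' : Matrix (Fin 3) (Fin 3) (ZMod 3)}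

lemma HasLatticeResidue.one : HasLatticeResidue 0 1 1 := by
  simpa [HasLatticeResidue] using HasResidue.one

lemma HasLatticeResidue.mul (h : HasLatticeResidue n U A) (h' : HasLatticeResidue n' U' A') :
    HasLatticeResidue (n + n') (U * U') (A * A') := by
  have hconj : latticeGL⁻¹ * (U * U') * latticeGL =
      latticeGL⁻¹ * U * latticeGL * (latticeGL⁻¹ * U' * latticeGL) := by group
  rw [HasLatticeResidue, hconj, Units.val_mul]
  exact HasResidue.mul h h'

lemma HasLatticeResidue.level_eq (h : HasLatticeResidue n U A) (h' : HasLatticeResidue n' U A')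
    (hA : A ≠ 0) (hA' : A' ≠ 0) : n = n' :=
  HasResidue.level_eq ker_evalZeta_le_ker_evalOne evalOne_one_sub_X h h' hA hA'

lemma HasLatticeResidue.unique (h : HasLatticeResidue n U A) (h' : HasLatticeResidue n U A') :
    A = A' :=
  HasResidue.unique ker_evalZeta_le_ker_evalOne evalOne_one_sub_X h h'

lemma HasLatticeResidue.pow (h : HasLatticeResidue 0 U A) (k : ℕ) :
    HasLatticeResidue 0 (U ^ k) (A ^ k) := by
  induction k with
  | zero => simpa only [pow_zero] using HasLatticeResidue.one
  | succ k ih => simpa only [pow_succ] using ih.mul h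

lemma hasLatticeResidue_of_mul_eq {N : Matrix (Fin 3) (Fin 3) ℤ[X]}
    (h : (1 - ζ) ^ n • (U.val * latticeMat) = latticeMat * N.map evalZeta)
    (hA : N.map evalOne = A) : HasLatticeResidue n U A := by
  refine ⟨N, ?_, hA⟩
  have hinv : latticeGL⁻¹.val * latticeMat = 1 := latticeGL.inv_val
  have hval : (latticeGL⁻¹ * U * latticeGL).val = latticeGL⁻¹.val * (U.val * latticeMat) :=
    Matrix.mul_assoc _ _ _
  have hϖ : evalZeta (1 - X) = 1 - ζ := by simp [evalZeta]
  rw [hval, hϖ, ← Matrix.mul_smul, h, ← Matrix.mul_assoc, hinv, Matrix.one_mul]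

lemma hasLatticeResidue_Hg : HasLatticeResidue 0 Hg !![0, 1, 0; -1, 0, 0; 0, 0, 1] := by
  have hζ := zeta_pow_six_add
  refine hasLatticeResidue_of_mul_eq (N := !![-1 - 2 * X ^ 3, 1, 0; 2, 1 + 2 * X ^ 3, 0;
    X - 1, X ^ 4 - X ^ 3, 1]) ?_ ?_
  · rw [val_Hg, latticeMat]
    ext i j
    fin_cases i <;> fin_cases j <;>
      simp [Matrix.mul_apply, Fin.sum_univ_three, evalZeta] <;> grind
  · ext i j
    fin_cases i <;> fin_cases j <;> simp [evalOne] <;> rfl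

lemma hasLatticeResidue_Sg : HasLatticeResidue 0 Sg !![1, 0, 0; -1, 1, 0; 0, 0, 1] := by
  have hζ := zeta_pow_six_add
  refine hasLatticeResidue_of_mul_eq (N := !![-X ^ 2 - X ^ 5, 0, 0;
    -X ^ 5, -X ^ 2 - X ^ 5, 1 + X - X ^ 2 - X ^ 5; 1 + X ^ 3 + X ^ 5, 0, X ^ 2]) ?_ ?_
  · rw [val_Sg, latticeMat]
    ext i j
    fin_cases i <;> fin_cases j <;>
      simp [Matrix.mul_apply, Fin.sum_univ_three, evalZeta] <;> grind
  · ext i j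
    fin_cases i <;> fin_cases j <;> simp [evalOne] <;> rfl

lemma hasLatticeResidue_Tg : HasLatticeResidue 1 Tg !![0, 0, 0; 1, 0, 0; -1, 0, 0] := by
  have hζ := zeta_pow_six_add
  refine hasLatticeResidue_of_mul_eq (N := !![1 - X, 0, 0;
    1 - X + 2 * X ^ 3 - 2 * X ^ 4 + X ^ 5, X - X ^ 2, X + X ^ 2 + X ^ 5;
    X - 1 - 2 * X ^ 3 + 2 * X ^ 4 - X ^ 5, 0, -1 - X ^ 2 - X ^ 5]) ?_ ?_
  · rw [val_Tg, latticeMat]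
    ext i j
    fin_cases i <;> fin_cases j <;>
      simp [Matrix.mul_apply, Fin.sum_univ_three, evalZeta] <;> grind
  · ext i j
    fin_cases i <;> fin_cases j <;> simp [evalOne] <;> rfl

end Lattice

section Clifford

open Equiv Subgroup

/-- The character `a ↦ ζ ^ a`. -/
def phase : AddChar (ZMod 9) ℂ := AddChar.zmodChar 9 zeta_pow_nine

lemma phase_one : phase 1 = ζ := by
  rw [phase, AddChar.zmodChar_apply]
  exact pow_one ζ

lemma phase_ofNat (k : ℕ) [k.AtLeastTwo] : phase (no_index (OfNat.ofNat k)) = ζ ^ k := by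
  rw [← phase_one, ← AddChar.map_nsmul_eq_pow, nsmul_one]
  rfl

lemma phase_injective : Function.Injective phase := fun a b h =>
  ZMod.val_injective 9 (zeta_isPrimitiveRoot.pow_inj a.val_lt b.val_lt h)

/-- The exponents of the diagonal matrices `diag (ζ ^ x₀, ζ ^ x₁, ζ ^ x₂)` of determinant `1`. -/
def zeroSumPhases : AddSubgroup (Fin 3 → ZMod 9) where
  carrier := {x | ∑ i, x i = 0}
  add_mem' {x y} hx hy := by
    change ∑ i, (x i + y i) = 0
    rw [Finset.sum_add_distrib, show ∑ i, x i = 0 from hx, show ∑ i, y i = 0 from hy, add_zero]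
  zero_mem' := by simp
  neg_mem' {x} hx := by simpa using hx

/-- The exponents of the diagonal Clifford matrices. -/
def cliffordPhases : AddSubgroup (Fin 3 → ZMod 9) where
  carrier := {x | x ∈ zeroSumPhases ∧ ∀ i j, 3 * x i = 3 * x j}
  add_mem' {x y} hx hy := ⟨add_mem hx.1 hy.1, fun i j => by
    simp only [Pi.add_apply, mul_add, hx.2 i j, hy.2 i j]⟩
  zero_mem' := ⟨zero_mem _, fun _ _ => rfl⟩
  neg_mem' {x} hx := ⟨neg_mem hx.1, fun i j => by simp only [Pi.neg_apply, mul_neg, hx.2 i j]⟩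

instance : DecidablePred (· ∈ zeroSumPhases) := fun x =>
  decidable_of_iff (∑ i, x i = 0) Iff.rfl

instance : DecidablePred (· ∈ cliffordPhases) := fun x =>
  decidable_of_iff (x ∈ zeroSumPhases ∧ ∀ i j, 3 * x i = 3 * x j) Iff.rfl

lemma card_zeroSumPhases : Nat.card zeroSumPhases = 81 := by
  rw [Nat.card_eq_fintype_card]
  decide +kernel

lemma card_cliffordPhases : Nat.card cliffordPhases = 27 := by
  rw [Nat.card_eq_fintype_card]
  decide +kernel

lemma zeroSumPhases_comp (x) (hx : x ∈ zeroSumPhases) (σ : Perm (Fin 3)) :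
    x ∘ σ ∈ zeroSumPhases :=
  (Equiv.sum_comp σ x).trans hx

lemma cliffordPhases_comp (x) (hx : x ∈ cliffordPhases) (σ : Perm (Fin 3)) :
    x ∘ σ ∈ cliffordPhases :=
  ⟨zeroSumPhases_comp x hx.1 σ, fun _ _ => hx.2 _ _⟩

/-- The group generated by the monomial Clifford matrices and `T`. -/
def monomialCliffT : Subgroup (GL (Fin 3) ℂ) :=
  monomialSubgroup phase zeroSumPhases zeroSumPhases_comp

/-- The group of monomial Clifford matrices. -/
def monomialCliff : Subgroup (GL (Fin 3) ℂ) :=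
  monomialSubgroup phase cliffordPhases cliffordPhases_comp

lemma card_monomialCliffT : Nat.card monomialCliffT = 486 := by
  rw [monomialCliffT, card_monomialSubgroup phase_injective, card_zeroSumPhases]
  rfl

lemma card_monomialCliff : Nat.card monomialCliff = 162 := by
  rw [monomialCliff, card_monomialSubgroup phase_injective, card_cliffordPhases]
  rfl

lemma monomialCliff_le_monomialCliffT : monomialCliff ≤ monomialCliffT := by
  rintro _ ⟨σ, x, hx, rfl⟩
  exact ⟨σ, x, hx.1, rfl⟩

lemma Sg_eq_monomialGL : Sg = monomialGL phase 1 ![8, 8, 2] := by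
  apply Units.ext
  rw [val_Sg]
  change _ = monomialMatrix _ _ _
  ext i j
  fin_cases i <;> fin_cases j <;> simp [monomialMatrix, phase_ofNat, zeta_pow_eight]

lemma Tg_eq_monomialGL : Tg = monomialGL phase 1 ![0, 1, 8] := by
  apply Units.ext
  rw [val_Tg]
  change _ = monomialMatrix _ _ _
  ext i j
  fin_cases i <;> fin_cases j <;> simp [monomialMatrix, phase_one, phase_ofNat, zeta_pow_eight]

lemma Xg_eq_monomialGL : Xg = monomialGL phase (finRotate 3) 0 := by
  apply Units.ext
  have hsign : Perm.sign (finRotate 3) = 1 := by decide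
  change Xmat = monomialMatrix _ _ _
  ext i j
  fin_cases i <;> fin_cases j <;> simp [Xmat, monomialMatrix, hsign]

lemma Hg_mul_Hg : Hg * Hg = monomialGL phase (swap 1 2) 0 := by
  apply Units.ext
  have hζ := zeta_pow_six_add
  have hsign : Perm.sign (swap (1 : Fin 3) 2) = -1 := by decide
  rw [Units.val_mul, val_Hg]
  change _ = monomialMatrix _ _ _
  ext i j
  fin_cases i <;> fin_cases j <;>
    simp [monomialMatrix, hsign, Matrix.mul_apply, Fin.sum_univ_three, swap_apply_def] <;> grind

lemma Hg_mul_Sg_mul_Hg :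
    Hg * (Sg * Hg) = Sg ^ 2 * Hg * monomialGL phase (swap 1 2) ![4, 4, 1] := by
  have hζ := zeta_pow_six_add
  have hsign : Perm.sign (swap (1 : Fin 3) 2) = -1 := by decide
  have hval : (monomialGL phase (swap 1 2) ![4, 4, 1]).val =
      !![-ζ ^ 4, 0, 0; 0, 0, -ζ; 0, -ζ ^ 4, 0] := by
    change monomialMatrix _ _ _ = _
    ext i j
    fin_cases i <;> fin_cases j <;>
      simp [monomialMatrix, hsign, phase_one, phase_ofNat, swap_apply_def]
  apply Units.ext
  simp only [pow_two, Units.val_mul, val_Hg, val_Sg, hval]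
  ext i j
  fin_cases i <;> fin_cases j <;> simp [Matrix.mul_apply, Fin.sum_univ_three] <;> grind

lemma Hg_mul_Sg_sq_mul_Hg :
    Hg * (Sg ^ 2 * Hg) = Sg * Hg * monomialGL phase (finRotate 3) ![5, 8, 5] := by
  have hζ := zeta_pow_six_add
  have hsign : Perm.sign (finRotate 3) = 1 := by decide
  have hval : (monomialGL phase (finRotate 3) ![5, 8, 5]).val =
      !![0, 0, ζ ^ 5; ζ ^ 5, 0, 0; 0, -ζ ^ 5 - ζ ^ 2, 0] := by
    change monomialMatrix _ _ _ = _
    ext i j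
    fin_cases i <;> fin_cases j <;> simp [monomialMatrix, hsign, phase_ofNat, zeta_pow_eight]
  apply Units.ext
  simp only [pow_two, Units.val_mul, val_Hg, val_Sg, hval]
  ext i j
  fin_cases i <;> fin_cases j <;> simp [Matrix.mul_apply, Fin.sum_univ_three] <;> grind

lemma Xg_mul_Hg : Xg * Hg = Hg * monomialGL phase 1 ![0, 6, 3] := by
  have hζ := zeta_pow_six_add
  have hval : (monomialGL phase 1 ![0, 6, 3]).val =
      !![1, 0, 0; 0, -ζ ^ 3 - 1, 0; 0, 0, ζ ^ 3] := by
    have hpow : ζ ^ 6 = -ζ ^ 3 - 1 := by linear_combination hζ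
    change monomialMatrix _ _ _ = _
    ext i j
    fin_cases i <;> fin_cases j <;> simp [monomialMatrix, phase_ofNat, hpow]
  apply Units.ext
  simp only [Units.val_mul, val_Hg, hval, show Xg.val = Xmat from rfl, Xmat]
  ext i j
  fin_cases i <;> fin_cases j <;> simp [Matrix.mul_apply, Fin.sum_univ_three] <;> grind

lemma Zg_eq_monomialGL : Zg = monomialGL phase 1 ![0, 3, 6] := by
  apply Units.ext
  change Zmat = monomialMatrix _ _ _
  rw [Zmat, omega_eq_zeta_pow]
  ext i j
  fin_cases i <;> fin_cases j <;> simp [monomialMatrix, phase_ofNat, ← pow_mul]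

lemma Hg_pow_four : Hg ^ 4 = 1 := by
  rw [show 4 = 2 * 2 from rfl, pow_mul, pow_two Hg, Hg_mul_Hg, ← monomialGL_pow_zero,
    ← monomialGL_one_zero phase]
  congr 1
  decide

lemma Sg_pow_nine : Sg ^ 9 = 1 := by
  rw [Sg_eq_monomialGL, ← monomialGL_one_nsmul, ← monomialGL_one_zero phase]
  congr 1
  decide

lemma commute_Sg_pow_three_Hg : Commute (Sg ^ 3) Hg := by
  have hscalar : (Sg ^ 3).val = (ζ ^ 8) ^ 3 • (1 : Matrix (Fin 3) (Fin 3) ℂ) := by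
    change Smat ^ 3 = _
    have hdiag : !![1, 0, 0; 0, 1, 0; 0, 0, ω] = diagonal ![1, 1, ω] := by
      ext i j
      fin_cases i <;> fin_cases j <;> rfl
    rw [Smat, smul_pow, hdiag, diagonal_pow, ← diagonal_one]
    congr 2
    funext i
    fin_cases i <;> simp [omega_cube]
  apply Units.ext
  rw [Units.val_mul, Units.val_mul, hscalar, Matrix.smul_mul, Matrix.mul_smul, Matrix.one_mul,
    Matrix.mul_one]

lemma inv_Tg : Tg⁻¹ = Hg * Hg * (Tg * (Hg * Hg)) := by
  rw [inv_eq_iff_mul_eq_one, Hg_mul_Hg, Tg_eq_monomialGL, monomialGL_mul, monomialGL_mul,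
    monomialGL_mul, ← monomialGL_one_zero phase]
  congr 1 <;> decide

lemma Zg_eq_mul : Zg = Sg ^ 8 * (Hg * Hg * (Sg * (Hg * Hg))) := by
  rw [Zg_eq_monomialGL, Hg_mul_Hg, Sg_eq_monomialGL, ← monomialGL_one_nsmul, monomialGL_mul,
    monomialGL_mul, monomialGL_mul]
  congr 1 <;> decide

lemma Xg_eq_mul : Xg = Hg * (Zg ^ 2 * Hg ^ 3) := by
  have hZ : monomialGL phase 1 ![0, 6, 3] = Zg ^ 2 := by
    rw [Zg_eq_monomialGL, ← monomialGL_one_nsmul]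
    congr 1
    decide
  rw [← mul_assoc, ← hZ, ← Xg_mul_Hg, mul_assoc, ← pow_succ', Hg_pow_four, mul_one]

lemma exists_eq_nsmul_add_nsmul_of_mem_cliffordPhases {x} (hx : x ∈ cliffordPhases) :
    ∃ k l : ℕ, x = k • ![8, 8, 2] + l • ![0, 3, 6] := by
  have hfin : ∀ x ∈ cliffordPhases, ∃ k : Fin 9, ∃ l : Fin 3,
      x = (k : ℕ) • ![8, 8, 2] + (l : ℕ) • ![0, 3, 6] := by decide +kernel
  obtain ⟨k, l, h⟩ := hfin x hx
  exact ⟨k, l, h⟩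

lemma exists_eq_finRotate_pow_mul_swap_pow (σ : Perm (Fin 3)) :
    ∃ k l : ℕ, σ = finRotate 3 ^ k * swap 1 2 ^ l := by
  have hfin : ∀ σ : Perm (Fin 3), ∃ k : Fin 3, ∃ l : Fin 2,
      σ = finRotate 3 ^ (k : ℕ) * swap 1 2 ^ (l : ℕ) := by decide
  obtain ⟨k, l, h⟩ := hfin σ
  exact ⟨k, l, h⟩

lemma monomialCliff_le_of_mem {P : Submonoid (GL (Fin 3) ℂ)} (hH : Hg * Hg ∈ P) (hS : Sg ∈ P)
    (hX : Xg ∈ P) : monomialCliff.toSubmonoid ≤ P := by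
  rintro _ ⟨σ, x, hx, rfl⟩
  obtain ⟨k, l, rfl⟩ := exists_eq_nsmul_add_nsmul_of_mem_cliffordPhases hx
  obtain ⟨i, j, rfl⟩ := exists_eq_finRotate_pow_mul_swap_pow σ
  have hZ : Zg ∈ P := by
    rw [Zg_eq_mul]
    exact mul_mem (pow_mem hS 8) (mul_mem hH (mul_mem hS hH))
  have hfactor : monomialGL phase (finRotate 3 ^ i * swap 1 2 ^ j)
      (k • ![8, 8, 2] + l • ![0, 3, 6]) =
      Xg ^ i * (Hg * Hg) ^ j * (Sg ^ k * Zg ^ l) := by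
    simp only [Xg_eq_monomialGL, Hg_mul_Hg, Sg_eq_monomialGL, Zg_eq_monomialGL,
      ← monomialGL_pow_zero, ← monomialGL_one_nsmul, monomialGL_mul, mul_one, zero_add,
      Pi.zero_comp]
    rfl
  rw [hfactor]
  exact mul_mem (mul_mem (pow_mem hX i) (pow_mem hH j)) (mul_mem (pow_mem hS k) (pow_mem hZ l))

lemma Cliff_toSubmonoid : Cliff.toSubmonoid = Submonoid.closure {Hg, Sg} := by
  refine closure_toSubmonoid_of_isOfFinOrder ?_
  rintro g (rfl | rfl)
  · exact isOfFinOrder_iff_pow_eq_one.mpr ⟨4, by norm_num, Hg_pow_four⟩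
  · exact isOfFinOrder_iff_pow_eq_one.mpr ⟨9, by norm_num, Sg_pow_nine⟩

lemma Xg_mem_of_mem {P : Submonoid (GL (Fin 3) ℂ)} (hH : Hg ∈ P) (hS : Sg ∈ P) : Xg ∈ P := by
  rw [Xg_eq_mul, Zg_eq_mul]
  have hHH := mul_mem hH hH
  exact mul_mem hH (mul_mem (pow_mem (mul_mem (pow_mem hS 8) (mul_mem hHH (mul_mem hS hHH))) 2)
    (pow_mem hH 3))

lemma Hg_mem_Cliff : Hg ∈ Cliff := subset_closure (by simp)

lemma Sg_mem_Cliff : Sg ∈ Cliff := subset_closure (by simp)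

lemma monomialCliff_le_Cliff : monomialCliff ≤ Cliff :=
  monomialCliff_le_of_mem (P := Cliff.toSubmonoid) (mul_mem Hg_mem_Cliff Hg_mem_Cliff) Sg_mem_Cliff
    (Xg_mem_of_mem Hg_mem_Cliff Sg_mem_Cliff)

lemma Hg_mul_Hg_mem_monomialCliff : Hg * Hg ∈ monomialCliff :=
  ⟨swap 1 2, 0, by decide, Hg_mul_Hg.symm⟩

lemma Sg_mem_monomialCliff : Sg ∈ monomialCliff := ⟨1, ![8, 8, 2], by decide, Sg_eq_monomialGL.symm⟩

/-- Representatives of the cosets of the monomial Clifford matrices in the Clifford group. -/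
def cosetRep : Fin 4 → GL (Fin 3) ℂ := ![1, Hg, Sg * Hg, Sg ^ 2 * Hg]

lemma cosetRep_mem_Cliff (i : Fin 4) : cosetRep i ∈ Cliff := by
  fin_cases i
  · exact one_mem _
  · exact Hg_mem_Cliff
  · exact mul_mem Sg_mem_Cliff Hg_mem_Cliff
  · exact mul_mem (pow_mem Sg_mem_Cliff 2) Hg_mem_Cliff

lemma exists_Hg_mul_cosetRep (i : Fin 4) :
    ∃ j, ∃ b ∈ monomialCliff, Hg * cosetRep i = cosetRep j * b := by
  fin_cases i
  · exact ⟨1, 1, one_mem _, rfl⟩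
  · exact ⟨0, Hg * Hg, Hg_mul_Hg_mem_monomialCliff, (one_mul (Hg * Hg)).symm⟩
  · exact ⟨3, monomialGL phase (swap 1 2) ![4, 4, 1], ⟨_, _, by decide, rfl⟩, Hg_mul_Sg_mul_Hg⟩
  · exact ⟨2, monomialGL phase (finRotate 3) ![5, 8, 5], ⟨_, _, by decide, rfl⟩,
      Hg_mul_Sg_sq_mul_Hg⟩

lemma exists_Sg_mul_cosetRep (i : Fin 4) :
    ∃ j, ∃ b ∈ monomialCliff, Sg * cosetRep i = cosetRep j * b := by
  fin_cases i
  · exact ⟨0, Sg, Sg_mem_monomialCliff, by simp [cosetRep]⟩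
  · exact ⟨2, 1, one_mem _, by simp [cosetRep]⟩
  · exact ⟨3, 1, one_mem _, by simp [cosetRep, pow_two, mul_assoc]⟩
  · refine ⟨1, Sg ^ 3, pow_mem Sg_mem_monomialCliff 3, ?_⟩
    change Sg * (Sg ^ 2 * Hg) = Hg * Sg ^ 3
    rw [← mul_assoc, ← pow_succ', commute_Sg_pow_three_Hg.eq]

lemma exists_eq_cosetRep_mul {c : GL (Fin 3) ℂ} (hc : c ∈ Cliff) :
    ∃ i, ∃ b ∈ monomialCliff, c = cosetRep i * b := by
  rw [← mem_toSubmonoid, Cliff_toSubmonoid] at hc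
  induction hc using Submonoid.closure_induction_left with
  | one => exact ⟨0, 1, one_mem _, (mul_one 1).symm⟩
  | mul_left g hg c _ ih =>
    obtain ⟨i, b, hb, rfl⟩ := ih
    obtain ⟨j, b', hb', h⟩ : ∃ j, ∃ b ∈ monomialCliff, g * cosetRep i = cosetRep j * b := by
      obtain rfl | rfl := hg
      · exact exists_Hg_mul_cosetRep i
      · exact exists_Sg_mul_cosetRep i
    exact ⟨j, b' * b, mul_mem hb' hb, by rw [← mul_assoc, h, mul_assoc]⟩

lemma mem_monomialCliff_or_mul_Tg_or_mul_inv_Tg {d : GL (Fin 3) ℂ} (hd : d ∈ monomialCliffT) :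
    d ∈ monomialCliff ∨ d * Tg ∈ monomialCliff ∨ d * Tg⁻¹ ∈ monomialCliff := by
  have hphases : ∀ x ∈ zeroSumPhases, x ∈ cliffordPhases ∨ x + ![0, 1, 8] ∈ cliffordPhases ∨
      x + ![0, 8, 1] ∈ cliffordPhases := by decide +kernel
  have hinv : Tg⁻¹ = monomialGL phase 1 ![0, 8, 1] := by
    rw [inv_eq_iff_mul_eq_one, Tg_eq_monomialGL, monomialGL_mul, ← monomialGL_one_zero phase]
    congr 1
    decide
  obtain ⟨σ, x, hx, rfl⟩ := hd
  rw [hinv, Tg_eq_monomialGL, monomialGL_mul, monomialGL_mul]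
  rcases hphases x hx with h | h | h
  · exact .inl ⟨_, _, h, rfl⟩
  · exact .inr (.inl ⟨_, _, h, rfl⟩)
  · exact .inr (.inr ⟨_, _, h, rfl⟩)

end Clifford

section BlockTriangular

variable (R : Type*) [CommRing R]

/-- The block lower triangular matrices whose upper left `2 × 2` block has determinant `1`. They
contain the residues of the Clifford group. -/
def blockTriangular : Submonoid (Matrix (Fin 3) (Fin 3) R) where
  carrier := {A | A 0 2 = 0 ∧ A 1 2 = 0 ∧ A 0 0 * A 1 1 - A 0 1 * A 1 0 = 1}
  mul_mem' {A B} := by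
    rintro ⟨hA₀, hA₁, hA⟩ ⟨hB₀, hB₁, hB⟩
    simp only [Set.mem_ofPred_eq, Matrix.mul_apply, Fin.sum_univ_three, hA₀, hA₁, hB₀, hB₁]
    exact ⟨by ring, by ring, by linear_combination hA + (A 0 0 * A 1 1 - A 0 1 * A 1 0) * hB⟩
  one_mem' := by simp

/-- The lower triangular matrices in `blockTriangular`. They contain the residues of the monomial
Clifford matrices. -/
def lowerTriangular : Submonoid (Matrix (Fin 3) (Fin 3) R) where
  carrier := {A | A ∈ blockTriangular R ∧ A 0 1 = 0}
  mul_mem' {A B} := by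
    rintro ⟨hA, hA₁⟩ ⟨hB, hB₁⟩
    refine ⟨mul_mem hA hB, ?_⟩
    simp [Matrix.mul_apply, Fin.sum_univ_three, hA₁, hA.1, hB₁]
  one_mem' := ⟨one_mem _, by simp⟩

variable {R} {A : Matrix (Fin 3) (Fin 3) R}

lemma mul_eq_one_of_mem_lowerTriangular (hA : A ∈ lowerTriangular R) : A 0 0 * A 1 1 = 1 := by
  simpa [hA.2] using hA.1.2.2

lemma ne_zero_of_mem_blockTriangular [Nontrivial R] (hA : A ∈ blockTriangular R) : A ≠ 0 := by
  rintro rfl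
  simpa using hA.2.2

end BlockTriangular

section PingPong


/-- The group elements that have a residue in `M` at level `0`. -/
def residueSubmonoid (M : Submonoid (Matrix (Fin 3) (Fin 3) (ZMod 3))) :
    Submonoid (GL (Fin 3) ℂ) where
  carrier := {g | ∃ A ∈ M, HasLatticeResidue 0 g A}
  mul_mem' := by
    rintro _ _ ⟨A, hA, hgA⟩ ⟨B, hB, hgB⟩
    exact ⟨A * B, mul_mem hA hB, hgA.mul hgB⟩
  one_mem' := ⟨1, one_mem M, HasLatticeResidue.one⟩

lemma hasLatticeResidue_Hg_mul_Hg :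
    HasLatticeResidue 0 (Hg * Hg) !![-1, 0, 0; 0, -1, 0; 0, 0, 1] := by
  convert hasLatticeResidue_Hg.mul hasLatticeResidue_Hg using 1
  decide

lemma hasLatticeResidue_Xg : HasLatticeResidue 0 Xg 1 := by
  have hHH := hasLatticeResidue_Hg_mul_Hg
  have hZ := (hasLatticeResidue_Sg.pow 8).mul (hHH.mul (hasLatticeResidue_Sg.mul hHH))
  rw [Xg_eq_mul, Zg_eq_mul]
  convert hasLatticeResidue_Hg.mul ((hZ.pow 2).mul (hasLatticeResidue_Hg.pow 3)) using 1
  decide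

lemma monomialCliff_le_residueSubmonoid :
    monomialCliff.toSubmonoid ≤ residueSubmonoid (lowerTriangular (ZMod 3)) := by
  refine monomialCliff_le_of_mem ?_ ?_ ⟨1, one_mem _, hasLatticeResidue_Xg⟩
  · exact ⟨_, ⟨⟨rfl, rfl, by decide⟩, rfl⟩, hasLatticeResidue_Hg_mul_Hg⟩
  · exact ⟨_, ⟨⟨rfl, rfl, by decide⟩, rfl⟩, hasLatticeResidue_Sg⟩

lemma Cliff_le_residueSubmonoid :
    Cliff.toSubmonoid ≤ residueSubmonoid (blockTriangular (ZMod 3)) := by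
  rw [Cliff_toSubmonoid, Submonoid.closure_le]
  rintro g (rfl | rfl)
  · exact ⟨_, ⟨rfl, rfl, by decide⟩, hasLatticeResidue_Hg⟩
  · exact ⟨_, ⟨rfl, rfl, by decide⟩, hasLatticeResidue_Sg⟩

lemma hasLatticeResidue_inv_Tg : HasLatticeResidue 1 Tg⁻¹ !![0, 0, 0; 1, 0, 0; 1, 0, 0] := by
  rw [inv_Tg]
  convert hasLatticeResidue_Hg_mul_Hg.mul
    (hasLatticeResidue_Tg.mul hasLatticeResidue_Hg_mul_Hg) using 1
  decide

/-- The residues of `cosetRep`. Their second columns represent the points of the projective line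
over `𝔽₃`, on which the Clifford group acts through the upper left block. -/
def cosetResidue : Fin 4 → Matrix (Fin 3) (Fin 3) (ZMod 3) :=
  ![1, !![0, 1, 0; -1, 0, 0; 0, 0, 1], !![0, 1, 0; -1, -1, 0; 0, 0, 1],
    !![0, 1, 0; -1, 1, 0; 0, 0, 1]]

lemma hasLatticeResidue_cosetRep (i : Fin 4) :
    HasLatticeResidue 0 (cosetRep i) (cosetResidue i) := by
  fin_cases i
  · exact HasLatticeResidue.one
  · exact hasLatticeResidue_Hg
  · change HasLatticeResidue 0 (Sg * Hg) _
    convert hasLatticeResidue_Sg.mul hasLatticeResidue_Hg using 1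
    decide
  · change HasLatticeResidue 0 (Sg ^ 2 * Hg) _
    convert (hasLatticeResidue_Sg.pow 2).mul hasLatticeResidue_Hg using 1
    decide

lemma exists_hasLatticeResidue_cosetRep_mul (i : Fin 4) {b : GL (Fin 3) ℂ}
    (hb : b ∈ monomialCliff) : ∃ A, HasLatticeResidue 0 (cosetRep i * b) A ∧
      ∃ u : (ZMod 3)ˣ, A 0 1 = cosetResidue i 0 1 * u ∧ A 1 1 = cosetResidue i 1 1 * u := by
  obtain ⟨B, hB, hbB⟩ := monomialCliff_le_residueSubmonoid hb
  have hcol : cosetResidue i 0 2 = 0 ∧ cosetResidue i 1 2 = 0 := by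
    fin_cases i <;> exact ⟨rfl, rfl⟩
  refine ⟨_, (hasLatticeResidue_cosetRep i).mul hbB, Units.mkOfMulEqOne _ _
    ((mul_comm _ _).trans (mul_eq_one_of_mem_lowerTriangular hB)), ?_, ?_⟩ <;>
    simp [Matrix.mul_apply, Fin.sum_univ_three, hcol, hB.2]

lemma cosetRep_mul_injOn :
    Set.InjOn (fun p : Fin 4 × GL (Fin 3) ℂ => cosetRep p.1 * p.2)
      (Set.univ ×ˢ (monomialCliff : Set (GL (Fin 3) ℂ))) := by
  rintro ⟨i, b⟩ ⟨-, hb⟩ ⟨j, b'⟩ ⟨-, hb'⟩ h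
  have hlines : ∀ (i j : Fin 4) (u v : (ZMod 3)ˣ),
      cosetResidue i 0 1 * u = cosetResidue j 0 1 * v →
      cosetResidue i 1 1 * u = cosetResidue j 1 1 * v → i = j := by decide
  obtain ⟨A, hA, u, hu₀, hu₁⟩ := exists_hasLatticeResidue_cosetRep_mul i hb
  obtain ⟨A', hA', v, hv₀, hv₁⟩ := exists_hasLatticeResidue_cosetRep_mul j hb'
  obtain rfl : A = A' := hA.unique ((show cosetRep i * b = cosetRep j * b' from h) ▸ hA')
  obtain rfl : i = j := hlines i j u v (hu₀.symm.trans hv₀) (hu₁.symm.trans hv₁)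
  exact Prod.ext rfl (mul_left_cancel h)

lemma card_Cliff : Nat.card Cliff = 648 := by
  have himage : (Cliff : Set (GL (Fin 3) ℂ)) =
      (fun p : Fin 4 × GL (Fin 3) ℂ => cosetRep p.1 * p.2) ''
        (Set.univ ×ˢ (monomialCliff : Set (GL (Fin 3) ℂ))) := by
    ext c
    constructor
    · intro hc
      obtain ⟨i, b, hb, rfl⟩ := exists_eq_cosetRep_mul hc
      exact ⟨(i, b), ⟨trivial, hb⟩, rfl⟩
    · rintro ⟨⟨i, b⟩, ⟨-, hb⟩, rfl⟩
      exact mul_mem (cosetRep_mem_Cliff i) (monomialCliff_le_Cliff hb)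
  change (Cliff : Set (GL (Fin 3) ℂ)).ncard = 648
  rw [himage, Set.InjOn.ncard_image cosetRep_mul_injOn, Set.ncard_prod, Set.ncard_univ,
    Nat.card_fin]
  change 4 * Nat.card monomialCliff = 648
  rw [card_monomialCliff]

instance : Finite Cliff := Nat.finite_of_card_ne_zero (by rw [card_Cliff]; decide)

instance : Finite monomialCliffT :=
  Nat.finite_of_card_ne_zero (by rw [card_monomialCliffT]; decide)

lemma exists_hasLatticeResidue_of_mem_Cliff_sdiff {c : GL (Fin 3) ℂ}
    (hc : c ∈ (Cliff : Set (GL (Fin 3) ℂ)) \ monomialCliffT) :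
    ∃ A ∈ blockTriangular (ZMod 3), HasLatticeResidue 0 c A ∧ A 0 1 ≠ 0 := by
  obtain ⟨i, b, hb, rfl⟩ := exists_eq_cosetRep_mul hc.1
  obtain ⟨A, hA, u, hu, -⟩ := exists_hasLatticeResidue_cosetRep_mul i hb
  obtain ⟨A', hA', hres⟩ := Cliff_le_residueSubmonoid hc.1
  obtain rfl : A = A' := hA.unique hres
  have hi : i ≠ 0 := by
    rintro rfl
    exact hc.2 (by simpa [cosetRep] using monomialCliff_le_monomialCliffT hb)
  have hentry : ∀ i ≠ 0, cosetResidue i 0 1 = 1 := by decide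
  exact ⟨A, hA', hA, by simp [hu, hentry i hi]⟩

lemma exists_hasLatticeResidue_mul {b t : GL (Fin 3) ℂ} {K : Matrix (Fin 3) (Fin 3) (ZMod 3)}
    (hb : b ∈ monomialCliff) (ht : HasLatticeResidue 1 t K) (hK₀ : K 0 = 0)
    (hK₁ : K 1 = Pi.single 0 1) :
    ∃ K, HasLatticeResidue 1 (b * t) K ∧ K 0 = 0 ∧ ∃ s ≠ 0, K 1 = Pi.single 0 s := by
  obtain ⟨B, hB, hbB⟩ := monomialCliff_le_residueSubmonoid hb
  have hrow : ∀ i, (B * K) i = B i 0 • K 0 + B i 1 • K 1 + B i 2 • K 2 := fun i => by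
    ext j
    simp [Matrix.mul_apply, Fin.sum_univ_three]
  refine ⟨B * K, hbB.mul ht, ?_, B 1 1, ?_, ?_⟩
  · rw [hrow, hK₀, hB.1.1, hB.2]
    simp
  · exact right_ne_zero_of_mul_eq_one (mul_eq_one_of_mem_lowerTriangular hB)
  · rw [hrow, hK₀, hK₁, hB.1.2.1]
    simp [← Pi.single_smul']

lemma exists_hasLatticeResidue_of_mem_monomialCliffT {d : GL (Fin 3) ℂ} (hd : d ∈ monomialCliffT)
    (hd' : d ∉ monomialCliff) :
    ∃ K, HasLatticeResidue 1 d K ∧ K 0 = 0 ∧ ∃ s ≠ 0, K 1 = Pi.single 0 s := by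
  rcases mem_monomialCliff_or_mul_Tg_or_mul_inv_Tg hd with hb | hb | hb
  · exact absurd hb hd'
  · rw [← mul_inv_cancel_right d Tg]
    exact exists_hasLatticeResidue_mul hb hasLatticeResidue_inv_Tg (by decide) (by decide)
  · rw [← inv_mul_cancel_right d Tg]
    exact exists_hasLatticeResidue_mul hb hasLatticeResidue_Tg (by decide) (by decide)

lemma Cliff_inf_monomialCliffT : Cliff ⊓ monomialCliffT = monomialCliff := by
  refine le_antisymm (fun g ⟨hC, hD⟩ => by_contra fun hB => ?_)
    (le_inf monomialCliff_le_Cliff monomialCliff_le_monomialCliffT)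
  obtain ⟨A, hA, hgA⟩ := Cliff_le_residueSubmonoid hC
  obtain ⟨K, hgK, -, s, hs, hK⟩ := exists_hasLatticeResidue_of_mem_monomialCliffT hD hB
  have hK₀ : K ≠ 0 := by
    rintro rfl
    exact hs (by simpa using congrFun hK.symm 0)
  exact absurd (hgA.level_eq hgK (ne_zero_of_mem_blockTriangular hA) hK₀) zero_ne_one

lemma relIndex_monomialCliffT_Cliff : monomialCliffT.relIndex Cliff = 4 := by
  have hcard := card_inf_mul_relIndex monomialCliffT Cliff
  rw [inf_comm, Cliff_inf_monomialCliffT, card_monomialCliff, card_Cliff] at hcard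
  omega

lemma relIndex_Cliff_monomialCliffT : Cliff.relIndex monomialCliffT = 3 := by
  have hcard := card_inf_mul_relIndex Cliff monomialCliffT
  rw [Cliff_inf_monomialCliffT, card_monomialCliff, card_monomialCliffT] at hcard
  omega

lemma exists_hasLatticeResidue_mul_of_mem_monomialCliffT_sdiff {d y : GL (Fin 3) ℂ} {n : ℕ}
    {A : Matrix (Fin 3) (Fin 3) (ZMod 3)} (hd : d ∈ (monomialCliffT : Set (GL (Fin 3) ℂ)) \ Cliff)
    (hy : HasLatticeResidue n y A) (hA : A 0 ≠ 0) :
    ∃ M, HasLatticeResidue (n + 1) (d * y) M ∧ M 0 = 0 ∧ M 1 ≠ 0 := by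
  obtain ⟨K, hK, hK₀, s, hs, hK₁⟩ := exists_hasLatticeResidue_of_mem_monomialCliffT hd.1
    fun hB => hd.2 (monomialCliff_le_Cliff hB)
  refine ⟨K * A, add_comm n 1 ▸ hK.mul hy, ?_, ?_⟩
  · rw [Matrix.mul_apply_eq_vecMul, hK₀, zero_vecMul]
  · rw [Matrix.mul_apply_eq_vecMul, hK₁, single_vecMul]
    exact smul_ne_zero hs hA

lemma exists_hasLatticeResidue_mul_of_mem_Cliff_sdiff {c y : GL (Fin 3) ℂ} {n : ℕ}
    {M : Matrix (Fin 3) (Fin 3) (ZMod 3)} (hc : c ∈ (Cliff : Set (GL (Fin 3) ℂ)) \ monomialCliffT)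
    (hy : HasLatticeResidue n y M) (hM₀ : M 0 = 0) (hM₁ : M 1 ≠ 0) :
    ∃ A, HasLatticeResidue n (c * y) A ∧ A 0 ≠ 0 := by
  obtain ⟨A, hA, hcA, hA₀⟩ := exists_hasLatticeResidue_of_mem_Cliff_sdiff hc
  refine ⟨A * M, zero_add n ▸ hcA.mul hy, ?_⟩
  have hrow : (A * M) 0 = A 0 1 • M 1 := by
    ext j
    simp [Matrix.mul_apply, Fin.sum_univ_three, hA.1, hM₀]
  rw [hrow]
  exact smul_ne_zero hA₀ hM₁

lemma exists_hasLatticeResidue_of_mem_reducedC {n : ℕ} {g : GL (Fin 3) ℂ}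
    (hg : g ∈ reducedC Cliff monomialCliffT n) :
    ∃ A, HasLatticeResidue n g A ∧ A 0 ≠ 0 := by
  induction n generalizing g with
  | zero =>
    obtain ⟨A, hA, hgA⟩ := Cliff_le_residueSubmonoid hg
    refine ⟨A, hgA, fun h => ?_⟩
    simpa [h] using hA.2.2
  | succ n ih =>
    obtain ⟨c, hc, _, ⟨d, hd, y, hy, rfl⟩, rfl⟩ := hg
    obtain ⟨A, hyA, hA⟩ := ih hy
    obtain ⟨M, hM, hM₀, hM₁⟩ :=
      exists_hasLatticeResidue_mul_of_mem_monomialCliffT_sdiff hd hyA hA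
    exact exists_hasLatticeResidue_mul_of_mem_Cliff_sdiff hc hM hM₀ hM₁

lemma exists_hasLatticeResidue_of_mem_reducedD {n : ℕ} {g : GL (Fin 3) ℂ}
    (hg : g ∈ reducedD Cliff monomialCliffT n) :
    ∃ M, HasLatticeResidue (n + 1) g M ∧ M 0 = 0 ∧ M 1 ≠ 0 := by
  obtain ⟨d, hd, y, hy, rfl⟩ := hg
  obtain ⟨A, hyA, hA⟩ := exists_hasLatticeResidue_of_mem_reducedC hy
  exact exists_hasLatticeResidue_mul_of_mem_monomialCliffT_sdiff hd hyA hA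

lemma disjoint_reducedC_reducedD (n m : ℕ) :
    Disjoint (reducedC Cliff monomialCliffT n) (reducedD Cliff monomialCliffT m) := by
  refine Set.disjoint_left.mpr fun g hC hD => ?_
  obtain ⟨A, hgA, hA⟩ := exists_hasLatticeResidue_of_mem_reducedC hC
  obtain ⟨M, hgM, hM₀, hM₁⟩ := exists_hasLatticeResidue_of_mem_reducedD hD
  obtain rfl : n = m + 1 :=
    hgA.level_eq hgM (fun h => hA (congrFun h 0)) (fun h => hM₁ (congrFun h 1))
  exact hA (hgA.unique hgM ▸ hM₀)

lemma exists_hasLatticeResidue_of_mem_reducedSphere {n : ℕ} {g : GL (Fin 3) ℂ}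
    (hg : g ∈ reducedSphere Cliff monomialCliffT n) :
    ∃ A, HasLatticeResidue n g A ∧ A ≠ 0 := by
  have hC : ∀ {k}, g ∈ reducedC Cliff monomialCliffT k → ∃ A, HasLatticeResidue k g A ∧ A ≠ 0 := by
    intro k hk
    obtain ⟨A, hgA, hA⟩ := exists_hasLatticeResidue_of_mem_reducedC hk
    exact ⟨A, hgA, fun h => hA (congrFun h 0)⟩
  cases n with
  | zero => exact hC (k := 0) hg
  | succ n =>
    rcases mem_reducedSphere_succ.mp hg with hg | hg
    · exact hC hg
    · obtain ⟨M, hgM, -, hM⟩ := exists_hasLatticeResidue_of_mem_reducedD hg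
      exact ⟨M, hgM, fun h => hM (congrFun h 1)⟩

lemma eq_of_mem_reducedSphere {n m : ℕ} {g : GL (Fin 3) ℂ}
    (hn : g ∈ reducedSphere Cliff monomialCliffT n)
    (hm : g ∈ reducedSphere Cliff monomialCliffT m) : n = m := by
  obtain ⟨A, hgA, hA⟩ := exists_hasLatticeResidue_of_mem_reducedSphere hn
  obtain ⟨A', hgA', hA'⟩ := exists_hasLatticeResidue_of_mem_reducedSphere hm
  exact hgA.level_eq hgA' hA hA'

end PingPong

section TCount

open Subgroup

/-- `g` is the product of a word in `H`, `S`, `T` in which `T` occurs `k` times. -/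
def HasWord (k : ℕ) (g : GL (Fin 3) ℂ) : Prop :=
  ∃ w, wordProd w = g ∧ w.count Letter.T = k

lemma HasWord.mul {k l : ℕ} {g h : GL (Fin 3) ℂ} (hg : HasWord k g) (hh : HasWord l h) :
    HasWord (k + l) (g * h) := by
  obtain ⟨v, rfl, rfl⟩ := hg
  obtain ⟨w, rfl, rfl⟩ := hh
  exact ⟨v ++ w, by simp [wordProd], List.count_append⟩

lemma hasWord_Hg : HasWord 0 Hg := ⟨[.H], mul_one Hg, rfl⟩

lemma hasWord_Sg : HasWord 0 Sg := ⟨[.S], mul_one Sg, rfl⟩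

lemma hasWord_Tg : HasWord 1 Tg := ⟨[.T], mul_one Tg, rfl⟩

lemma hasWord_inv_Tg : HasWord 1 Tg⁻¹ := by
  rw [inv_Tg]
  exact (hasWord_Hg.mul hasWord_Hg).mul (hasWord_Tg.mul (hasWord_Hg.mul hasWord_Hg))

lemma hasWord_of_mem_Cliff {c : GL (Fin 3) ℂ} (hc : c ∈ Cliff) : HasWord 0 c := by
  rw [← mem_toSubmonoid, Cliff_toSubmonoid] at hc
  induction hc using Submonoid.closure_induction with
  | mem g hg =>
    obtain rfl | rfl := hg
    · exact hasWord_Hg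
    · exact hasWord_Sg
  | one => exact ⟨[], rfl, rfl⟩
  | mul g h _ _ ihg ihh => exact ihg.mul ihh

lemma hasWord_of_mem_monomialCliffT_sdiff {d : GL (Fin 3) ℂ}
    (hd : d ∈ (monomialCliffT : Set (GL (Fin 3) ℂ)) \ Cliff) : HasWord 1 d := by
  rcases mem_monomialCliff_or_mul_Tg_or_mul_inv_Tg hd.1 with hb | hb | hb
  · exact absurd (monomialCliff_le_Cliff hb) hd.2
  · rw [← mul_inv_cancel_right d Tg]
    exact (hasWord_of_mem_Cliff (monomialCliff_le_Cliff hb)).mul hasWord_inv_Tg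
  · rw [← inv_mul_cancel_right d Tg]
    exact (hasWord_of_mem_Cliff (monomialCliff_le_Cliff hb)).mul hasWord_Tg

lemma hasWord_of_mem_reducedC {n : ℕ} {g : GL (Fin 3) ℂ}
    (hg : g ∈ reducedC Cliff monomialCliffT n) : HasWord n g := by
  induction n generalizing g with
  | zero => exact hasWord_of_mem_Cliff hg
  | succ n ih =>
    obtain ⟨c, hc, _, ⟨d, hd, y, hy, rfl⟩, rfl⟩ := hg
    have hword := (hasWord_of_mem_Cliff hc.1).mul
      ((hasWord_of_mem_monomialCliffT_sdiff hd).mul (ih hy))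
    rwa [zero_add, add_comm] at hword

lemma hasWord_of_mem_reducedSphere {n : ℕ} {g : GL (Fin 3) ℂ}
    (hg : g ∈ reducedSphere Cliff monomialCliffT n) : HasWord n g := by
  cases n with
  | zero => exact hasWord_of_mem_Cliff hg
  | succ n =>
    obtain ⟨c, hc, _, ⟨d, hd, y, hy, rfl⟩, rfl⟩ := hg
    have hword := (hasWord_of_mem_Cliff hc).mul
      ((hasWord_of_mem_monomialCliffT_sdiff hd).mul (hasWord_of_mem_reducedC hy))
    rwa [zero_add, add_comm] at hword

lemma Tg_mem_monomialCliffT : Tg ∈ monomialCliffT :=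
  ⟨1, ![0, 1, 8], by decide, Tg_eq_monomialGL.symm⟩

lemma exists_wordProd_mem_reducedSphere (w : List Letter) :
    ∃ j ≤ w.count Letter.T, wordProd w ∈ reducedSphere Cliff monomialCliffT j := by
  induction w with
  | nil => exact ⟨0, le_rfl, one_mem Cliff⟩
  | cons a w ih =>
    obtain ⟨j, hj, hw⟩ := ih
    have hcons : wordProd (a :: w) = a.g * wordProd w := List.prod_cons
    rw [hcons]
    cases a with
    | H => exact ⟨j, by simpa using hj, mul_mem_reducedSphere Hg_mem_Cliff hw⟩
    | S => exact ⟨j, by simpa using hj, mul_mem_reducedSphere Sg_mem_Cliff hw⟩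
    | T =>
      obtain ⟨l, hl, hmem⟩ := exists_mul_mem_reducedSphere Tg_mem_monomialCliffT hw
      exact ⟨l, by rw [List.count_cons_self]; omega, hmem⟩

lemma minTcount_eq_of_mem_reducedSphere {n : ℕ} {g : GL (Fin 3) ℂ}
    (hg : g ∈ reducedSphere Cliff monomialCliffT n) : minTcount g = n := by
  have hword : HasWord n g := hasWord_of_mem_reducedSphere hg
  refine le_antisymm (Nat.sInf_le hword) (le_csInf ⟨n, hword⟩ ?_)
  rintro _ ⟨w, rfl, rfl⟩
  obtain ⟨j, hj, hw⟩ := exists_wordProd_mem_reducedSphere w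
  exact eq_of_mem_reducedSphere hw hg ▸ hj

lemma CliffT_le_sup : CliffT ≤ Cliff ⊔ monomialCliffT := by
  refine (closure_le _).mpr ?_
  rintro g (rfl | rfl | rfl)
  · exact mem_sup_left Hg_mem_Cliff
  · exact mem_sup_left Sg_mem_Cliff
  · exact mem_sup_right Tg_mem_monomialCliffT

lemma wordProd_mem_CliffT (w : List Letter) : wordProd w ∈ CliffT := by
  refine list_prod_mem fun g hg => ?_
  obtain ⟨a, -, rfl⟩ := List.mem_map.mp hg
  cases a <;> exact subset_closure (by simp [Letter.g])

lemma setOf_minTcount_eq (n : ℕ) :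
    {U | U ∈ CliffT ∧ minTcount U = n} = reducedSphere Cliff monomialCliffT n := by
  ext g
  constructor
  · rintro ⟨hg, rfl⟩
    obtain ⟨k, hk⟩ := exists_mem_reducedSphere_of_mem_sup (CliffT_le_sup hg)
    rwa [minTcount_eq_of_mem_reducedSphere hk]
  · intro hg
    obtain ⟨w, rfl, -⟩ := hasWord_of_mem_reducedSphere hg
    exact ⟨wordProd_mem_CliffT w, minTcount_eq_of_mem_reducedSphere hg⟩

lemma ncard_minTcount_eq_zero : {U | U ∈ CliffT ∧ minTcount U = 0}.ncard = 648 := by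
  rw [setOf_minTcount_eq]
  exact card_Cliff

lemma ncard_minTcount_eq_succ (n : ℕ) :
    {U | U ∈ CliffT ∧ minTcount U = n + 1}.ncard = 5184 * 6 ^ n := by
  rw [setOf_minTcount_eq, ncard_reducedSphere_succ disjoint_reducedC_reducedD,
    relIndex_monomialCliffT_Cliff, relIndex_Cliff_monomialCliffT, card_Cliff]
  ring

lemma finite_minTcount_le (n : ℕ) : {U | U ∈ CliffT ∧ minTcount U ≤ n}.Finite := by
  have hsphere : ∀ k, {U | U ∈ CliffT ∧ minTcount U = k}.Finite := fun k => by
    apply Set.finite_of_ncard_ne_zero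
    cases k with
    | zero => rw [ncard_minTcount_eq_zero]; decide
    | succ k => rw [ncard_minTcount_eq_succ]; positivity
  refine ((Set.finite_Iic n).biUnion fun k _ => hsphere k).subset ?_
  rintro U ⟨hU, hUn⟩
  exact Set.mem_biUnion hUn ⟨hU, rfl⟩

lemma ncard_minTcount_le_mul_five (n : ℕ) :
    {U | U ∈ CliffT ∧ minTcount U ≤ n}.ncard * 5 + 1944 = 5184 * 6 ^ n := by
  induction n with
  | zero => simp only [Nat.le_zero, ncard_minTcount_eq_zero]; norm_num
  | succ n ih =>
    have hunion : {U | U ∈ CliffT ∧ minTcount U ≤ n + 1} =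
        {U | U ∈ CliffT ∧ minTcount U ≤ n} ∪ {U | U ∈ CliffT ∧ minTcount U = n + 1} := by
      ext U
      simp only [Set.mem_ofPred_eq, Set.mem_union, Nat.le_succ_iff, and_or_left]
    have hdisj : Disjoint {U | U ∈ CliffT ∧ minTcount U ≤ n}
        {U | U ∈ CliffT ∧ minTcount U = n + 1} :=
      Set.disjoint_left.mpr fun U hle heq => by have := hle.2; have := heq.2; omega
    rw [hunion, Set.ncard_union_eq hdisj (finite_minTcount_le n)
      ((finite_minTcount_le (n + 1)).subset fun U hU => ⟨hU.1, hU.2.le⟩),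
      ncard_minTcount_eq_succ, pow_succ]
    omega

end TCount

/-- For every n ≥ 1, the number of elements of the Clifford+T group
whose minimal T-count equals n is exactly 5184·6^{n−1}; equivalently, for every n ≥ 0,
the number of elements whose minimal T-count is at most n equals 648·(8·6ⁿ − 3)/5. -/
theorem count_of_elements_by_minimal_T_count :
    (∀ n : ℕ, 1 ≤ n →
      {U : GL (Fin 3) ℂ | U ∈ CliffT ∧ minTcount U = n}.ncard = 5184 * 6 ^ (n - 1)) ∧
    (∀ n : ℕ,
      {U : GL (Fin 3) ℂ | U ∈ CliffT ∧ minTcount U ≤ n}.ncard = 648 * (8 * 6 ^ n - 3) / 5) := by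
  refine ⟨fun n hn => ?_, fun n => ?_⟩
  · obtain ⟨k, rfl⟩ := Nat.exists_eq_add_of_le' hn
    exact ncard_minTcount_eq_succ k
  · have hcount := ncard_minTcount_le_mul_five n
    omega

end
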